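/- The edge set ⋃_{d ∈ {2,5}} (E₀₁(d) ∪ E₁₂(d) ∪ E₂₀(d)) can be partitioned into 2 edge-disjoint C₇-factors of the complete tripartite graph K_{7,7,7}. -/

import Mathlib

open SimpleGraph

/-- `F` is an `H`-factor (of the complete graph on its vertex type, or of any graph
containing it): every connected component of `F`, viewed as an induced subgraph,
is isomorphic to `H`.  Since `F` is a graph on all of `V`, it is automatically spanning. -/
def IsHFactor {V W : Type*} (H : SimpleGraph W) (F : SimpleGraph V) : Prop :=
  ∀ c : F.ConnectedComponent, Nonempty (F.induce c.supp ≃g H)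

/-- A `C_k`-factor: a spanning subgraph each of whose connected components is a
cycle of length `k` (in particular it is 2-regular). -/
def IsCycleFactor {V : Type*} (k : ℕ) (F : SimpleGraph V) : Prop :=
  IsHFactor (SimpleGraph.cycleGraph k) F

/-- `(G; C_m^r, C_k^s)`: a partition of the edge set of `G` into `r` `C_m`-factors
and `s` `C_k`-factors. -/
def IsCycleDecomp {V : Type*} (G : SimpleGraph V) (m k r s : ℕ) : Prop :=
  ∃ F : Fin r ⊕ Fin s → SimpleGraph V,
    (∀ i, F i ≤ G) ∧
    (∀ e ∈ G.edgeSet, ∃! i, e ∈ (F i).edgeSet) ∧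
    (∀ i : Fin r, IsCycleFactor m (F (Sum.inl i))) ∧
    (∀ j : Fin s, IsCycleFactor k (F (Sum.inr j)))

/-- The complete tripartite graph `K_{7,7,7}` on vertex set `Z₇ × Z₃`, with the three
partite sets `V_i = Z₇ × {i}` for `i ∈ Z₃` (the vertex `j_i` is the pair `(j, i)`). -/
def K777 : SimpleGraph (ZMod 7 × ZMod 3) where
  Adj x y := x.2 ≠ y.2
  symm := ⟨fun _ _ h => h.symm⟩
  loopless := ⟨fun _ h => h rfl⟩

/-- The edge set `E_{ij}(d) = {{l_i, (l+d)_j} : l ∈ Z₇}`. -/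
def Eij (i j : ZMod 3) (d : ZMod 7) : Set (Sym2 (ZMod 7 × ZMod 3)) :=
  {e | ∃ l : ZMod 7, e = s((l, i), (l + d, j))}

/-!
For a map `p : V → A` into a group, the sets `{x : V × A | x.2 - p x.1 = t}` carry disjoint copies
of a graph `G` on `V`; if `G` is connected, these copies are the components of their union. Now let
`p` be a proper `3`-colouring of `G` by `ℤ/3`. Its differences along the edges of `G` are `±1`, so
each edge of the tensor product `G × K₃` lies in a copy of `G` for exactly one of `p` and `-p`. The
theorem is the case where `G` is the `7`-cycle joining the residues modulo `7` that differ by `±2`.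
-/

section Factor

variable {V W W' : Type*}

theorem IsHFactor.congr {H : SimpleGraph W} {H' : SimpleGraph W'} {F : SimpleGraph V}
    (hF : IsHFactor H F) (e : H ≃g H') : IsHFactor H' F :=
  fun c ↦ (hF c).map (·.trans e)

end Factor

section ShearedCopies

variable {V A : Type*} [AddGroup A]

/-- The disjoint union of the copies `{(v, t + p v)}`, `t : A`, of `G` in `V × A`. -/
def shearedCopies (G : SimpleGraph V) (p : V → A) : SimpleGraph (V × A) where
  Adj x y := G.Adj x.1 y.1 ∧ x.2 - p x.1 = y.2 - p y.1
  symm := ⟨fun _ _ h ↦ ⟨h.1.symm, h.2.symm⟩⟩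
  loopless := ⟨fun _ h ↦ h.1.ne rfl⟩

namespace shearedCopies

variable {G : SimpleGraph V} {p : V → A}

theorem adj_iff {x y : V × A} :
    (shearedCopies G p).Adj x y ↔ G.Adj x.1 y.1 ∧ x.2 - p x.1 = y.2 - p y.1 :=
  Iff.rfl

variable (G p) in
/-- The copy of `G` in `shearedCopies G p` on which `x.2 - p x.1` takes the value `t`. -/
def copy (t : A) : G ↪g shearedCopies G p where
  toFun v := (v, t + p v)
  inj' _ _ h := congrArg Prod.fst h
  map_rel_iff' {a b} := by
    change G.Adj a b ∧ t + p a - p a = t + p b - p b ↔ G.Adj a b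
    simp only [add_sub_cancel_right, and_true]

theorem mem_range_copy {t : A} {x : V × A} :
    x ∈ Set.range (copy G p t) ↔ x.2 - p x.1 = t := by
  constructor
  · rintro ⟨v, rfl⟩
    exact add_sub_cancel_right t (p v)
  · rintro rfl
    exact ⟨x.1, Prod.ext rfl (sub_add_cancel x.2 (p x.1))⟩

theorem sub_eq_sub_of_reachable {x y : V × A} (h : (shearedCopies G p).Reachable x y) :
    x.2 - p x.1 = y.2 - p y.1 := by
  obtain ⟨w⟩ := h
  induction w with
  | nil => rfl
  | cons hadj _ ih => exact hadj.2.trans ih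

theorem reachable_of_mem_range_copy (hG : G.Preconnected) {t : A} {x y : V × A}
    (hx : x ∈ Set.range (copy G p t)) (hy : y ∈ Set.range (copy G p t)) :
    (shearedCopies G p).Reachable x y := by
  obtain ⟨u, rfl⟩ := hx
  obtain ⟨v, rfl⟩ := hy
  exact (hG u v).map (copy G p t).toHom

theorem supp_connectedComponentMk (hG : G.Preconnected) (x : V × A) :
    ((shearedCopies G p).connectedComponentMk x).supp =
      Set.range (copy G p (x.2 - p x.1)) := by
  ext y
  rw [ConnectedComponent.mem_supp_iff, ConnectedComponent.eq]
  exact ⟨fun h ↦ mem_range_copy.2 (sub_eq_sub_of_reachable h),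
    fun hy ↦ reachable_of_mem_range_copy hG hy (mem_range_copy.2 rfl)⟩

theorem isHFactor (hG : G.Preconnected) : IsHFactor G (shearedCopies G p) := by
  intro c
  induction c using ConnectedComponent.ind with
  | _ x =>
    rw [supp_connectedComponentMk hG]
    exact ⟨(copy G p _).isoInduceRange.symm⟩

end shearedCopies

end ShearedCopies

section TensorComplete

variable {V : Type*}

/-- The tensor (categorical) product of `G` with the complete graph on `A`, where both coordinates
have to move along an edge. -/
def tensorComplete (G : SimpleGraph V) (A : Type*) : SimpleGraph (V × A) :=
  G.comap Prod.fst ⊓ (⊤ : SimpleGraph A).comap Prod.snd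

theorem tensorComplete_adj {G : SimpleGraph V} {A : Type*} {x y : V × A} :
    (tensorComplete G A).Adj x y ↔ G.Adj x.1 y.1 ∧ x.2 ≠ y.2 :=
  Iff.rfl

variable {G : SimpleGraph V} (C : G.Coloring (ZMod 3))

theorem disjoint_shearedCopies_neg : Disjoint (shearedCopies G C) (shearedCopies G (-C)) := by
  have not_both : ∀ a b i j : ZMod 3, a ≠ b → i - a = j - b → i - -a ≠ j - -b := by decide
  rw [disjoint_left]
  exact fun x y hC hneg ↦ not_both _ _ _ _ (C.valid hC.1) hC.2 hneg.2

theorem shearedCopies_sup_shearedCopies_neg :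
    shearedCopies G C ⊔ shearedCopies G (-C) = tensorComplete G (ZMod 3) := by
  have ne_iff : ∀ a b i j : ZMod 3, a ≠ b → (i - a = j - b ∨ i - -a = j - -b ↔ i ≠ j) := by decide
  ext x y
  simp only [sup_adj, shearedCopies.adj_iff, tensorComplete_adj, Pi.neg_apply, ← and_or_left]
  exact and_congr_right fun h ↦ ne_iff _ _ _ _ (C.valid h)

theorem exists_isHFactor_sup_eq_tensorComplete (hG : G.Preconnected) (hcol : G.Colorable 3) :
    ∃ F₁ F₂ : SimpleGraph (V × ZMod 3), IsHFactor G F₁ ∧ IsHFactor G F₂ ∧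
      Disjoint F₁ F₂ ∧ F₁ ⊔ F₂ = tensorComplete G (ZMod 3) := by
  obtain ⟨C⟩ : Nonempty (G.Coloring (ZMod 3)) := hcol
  exact ⟨shearedCopies G C, shearedCopies G (-C), shearedCopies.isHFactor hG,
    shearedCopies.isHFactor hG, disjoint_shearedCopies_neg C,
    shearedCopies_sup_shearedCopies_neg C⟩

end TensorComplete

section Circulant

/-- The isomorphism of circulant graphs induced by an isomorphism of their vertex groups. -/
def circulantGraphIso {A B : Type*} [AddGroup A] [AddGroup B] (e : A ≃+ B) (s : Set A) :
    circulantGraph s ≃g circulantGraph (e '' s) where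
  toEquiv := e.toEquiv
  map_rel_iff' := by simp [circulantGraph_adj, ← map_sub]

theorem nonempty_cycleGraph_iso_circulantGraph {n : ℕ} [NeZero n] {d : ZMod n} (hd : IsUnit d) :
    Nonempty (cycleGraph n ≃g circulantGraph {d}) := by
  obtain ⟨n, rfl⟩ : ∃ m, n = m + 1 := Nat.exists_eq_succ_of_ne_zero (NeZero.ne n)
  obtain ⟨u, rfl⟩ := hd
  rw [cycleGraph_eq_circulantGraph]
  have e := circulantGraphIso (DistribMulAction.toAddEquiv (ZMod (n + 1)) u) {1}
  rw [Set.image_singleton, DistribMulAction.toAddEquiv_apply, Units.smul_def, smul_eq_mul,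
    mul_one] at e
  exact ⟨e⟩

end Circulant

section DifferenceEdges

variable {A ι : Type*} [AddCommGroup A]

/-- The edge sets `Eij` over an arbitrary group in place of `ZMod 7`, with arbitrarily indexed
parts. -/
def differenceEdges (i j : ι) (d : A) : Set (Sym2 (A × ι)) :=
  {e | ∃ l : A, e = s((l, i), (l + d, j))}

theorem mk_mem_differenceEdges {i j : ι} {d : A} {x y : A × ι} :
    s(x, y) ∈ differenceEdges i j d ↔
      (x.2 = i ∧ y.2 = j ∧ y.1 - x.1 = d) ∨ (y.2 = i ∧ x.2 = j ∧ x.1 - y.1 = d) := by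
  simp only [differenceEdges, Set.mem_ofPred_eq, Sym2.eq_iff, Prod.ext_iff]
  grind

theorem mk_mem_differenceEdges_union_neg {i j : ι} {d : A} (hd : d ≠ 0) {x y : A × ι} :
    s(x, y) ∈ differenceEdges i j d ∪ differenceEdges i j (-d) ↔
      (circulantGraph {d}).Adj x.1 y.1 ∧ s(x.2, y.2) = s(i, j) := by
  simp only [Set.mem_union, mk_mem_differenceEdges, circulantGraph_adj, Set.mem_singleton_iff,
    Sym2.eq_iff]
  grind

theorem edgeSet_tensorComplete_circulantGraph {d : A} (hd : d ≠ 0) :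
    (tensorComplete (circulantGraph {d}) (ZMod 3)).edgeSet =
      ⋃ e ∈ ({d, -d} : Set A),
        (differenceEdges 0 1 e ∪ differenceEdges 1 2 e ∪ differenceEdges 2 0 e) := by
  have ne_iff : ∀ i j : ZMod 3,
      i ≠ j ↔ (s(i, j) = s(0, 1) ∨ s(i, j) = s(1, 2)) ∨ s(i, j) = s(2, 0) := by decide
  rw [Set.biUnion_pair, Set.union_union_union_comm,
    Set.union_union_union_comm (differenceEdges 0 1 d)]
  ext e
  induction e using Sym2.ind with
  | _ x y =>
    rw [mem_edgeSet, tensorComplete_adj, ne_iff, Set.mem_union, Set.mem_union]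
    simp only [mk_mem_differenceEdges_union_neg hd, and_or_left]

end DifferenceEdges

theorem two_heptagon_factors_2_5_general {n : ℕ} (hn : 2 ≤ n) {d : ZMod n} (hd : IsUnit d) :
    ∃ F₁ F₂ : SimpleGraph (ZMod n × ZMod 3),
      F₁ ≤ (⊤ : SimpleGraph (ZMod 3)).comap Prod.snd ∧
      F₂ ≤ (⊤ : SimpleGraph (ZMod 3)).comap Prod.snd ∧
      IsCycleFactor n F₁ ∧ IsCycleFactor n F₂ ∧
      Disjoint F₁.edgeSet F₂.edgeSet ∧
      F₁.edgeSet ∪ F₂.edgeSet =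
        ⋃ e ∈ ({d, -d} : Set (ZMod n)),
          (differenceEdges 0 1 e ∪ differenceEdges 1 2 e ∪ differenceEdges 2 0 e) := by
  have : NeZero n := ⟨by lia⟩
  have : Fact (1 < n) := ⟨hn⟩
  obtain ⟨φ⟩ := nonempty_cycleGraph_iso_circulantGraph hd
  have hconn : (circulantGraph {d}).Preconnected :=
    cycleGraph_preconnected.map φ.toHom φ.surjective
  have hcol : (circulantGraph {d}).Colorable 3 :=
    ⟨(cycleGraph.tricoloring n hn).comp φ.symm.toHom⟩
  obtain ⟨F₁, F₂, h₁, h₂, hdisj, hsup⟩ := exists_isHFactor_sup_eq_tensorComplete hconn hcol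
  have hle : F₁ ⊔ F₂ ≤ (⊤ : SimpleGraph (ZMod 3)).comap Prod.snd := hsup.trans_le inf_le_right
  refine ⟨F₁, F₂, le_sup_left.trans hle, le_sup_right.trans hle, h₁.congr φ.symm, h₂.congr φ.symm,
    disjoint_edgeSet.2 hdisj, ?_⟩
  rw [← edgeSet_sup, hsup, edgeSet_tensorComplete_circulantGraph hd.ne_zero]

/-- Lemma 2.4: the edges of `⋃_{d ∈ {2,5}} (E₀₁(d) ∪ E₁₂(d) ∪ E₂₀(d))` can be
decomposed into two edge-disjoint `C₇`-factors of `K_{7,7,7}`. -/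
theorem two_heptagon_factors_2_5 :
    ∃ F₁ F₂ : SimpleGraph (ZMod 7 × ZMod 3),
      F₁ ≤ K777 ∧ F₂ ≤ K777 ∧
      IsCycleFactor 7 F₁ ∧ IsCycleFactor 7 F₂ ∧
      Disjoint F₁.edgeSet F₂.edgeSet ∧
      F₁.edgeSet ∪ F₂.edgeSet =
        ⋃ d ∈ ({2, 5} : Set (ZMod 7)), (Eij 0 1 d ∪ Eij 1 2 d ∪ Eij 2 0 d) := by
  have five_eq_neg_two : (5 : ZMod 7) = -2 := rfl
  rw [five_eq_neg_two]
  exact two_heptagon_factors_2_5_general (by decide)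
    (ZMod.isUnit_prime_of_not_dvd Nat.prime_two (by decide))
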